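/- Moment-determinacy lemma (even case): let s ∈ (0,1), and let F(x) = f(x) e_{q²}(-x²) with f(x) = Σ_n a_{2n} x^{2n} an even entire function whose coefficients satisfy |a_{2n}| ≤ C s^n q^{2n²} for some C > 0. If ∫_γ x^{2k} F(x) d_q x = 0 for all k ≥ 0 and some γ > 0, then F ≡ 0. -/

import Mathlib

open scoped BigOperators

noncomputable section

/-- finite q-Pochhammer symbol `(a;q)_k` -/
def qPoch (q a : ℝ) (k : ℕ) : ℝ := ∏ j ∈ Finset.range k, (1 - a * q ^ j)

/-- infinite q-Pochhammer symbol `(a;q)_∞` -/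
def qPochInf (q a : ℝ) : ℝ := ∏' j : ℕ, (1 - a * q ^ j)

/-- q-integral over the lattice `L(γ) = {± q^k γ}` -/
def qInt (q γ : ℝ) (f : ℝ → ℝ) : ℝ :=
  (1 - q) * ∑' k : ℤ, (q ^ k * γ) * (f (q ^ k * γ) + f (-(q ^ k * γ)))

/-- k-th q-moment -/
def qMoment (q γ : ℝ) (e : ℕ) (f : ℝ → ℝ) : ℝ :=
  q ^ (e * (e + 1) / 2) * qInt q γ (fun x => f x * x ^ e)

/-- k-th strict q-moment -/
def qNu (q γ : ℝ) (e : ℕ) (f : ℝ → ℝ) : ℝ :=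
  q ^ (e * (e + 1) / 2) * qInt q γ (fun x => |f x * x ^ e|)

/-- q-derivative -/
def qDeriv (q : ℝ) (f : ℝ → ℝ) : ℝ → ℝ := fun x => (f x - f (q * x)) / ((1 - q) * x)

/-- q-factorial `[e]_q!` -/
def qFact (q : ℝ) (e : ℕ) : ℝ := qPoch q q e / (1 - q) ^ e

/-- q-binomial coefficient -/
def qBinom (q : ℝ) (n k : ℕ) : ℝ := qPoch q q n / (qPoch q q k * qPoch q q (n - k))

/-- q-convolution -/
def qConv (q γ : ℝ) (f g : ℝ → ℝ) : ℝ → ℝ :=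
  fun x => ∑' e : ℕ, (-1) ^ e * qMoment q γ e f / qFact q e * (qDeriv q)^[e] g x

/-- the q-Gaussian `e_{q²}(-x²)` -/
def qGauss (q : ℝ) : ℝ → ℝ := fun x => 1 / qPochInf (q ^ 2) (-(x ^ 2))

/-- discrete q-Hermite II polynomials -/
def qHermiteII (q : ℝ) (k : ℕ) (x : ℝ) : ℝ :=
  qPoch q q k * ∑ l ∈ Finset.range (k / 2 + 1),
    (-1) ^ l * q ^ (2 * l ^ 2 + l) / q ^ (2 * l * k) * x ^ (k - 2 * l) /
      (qPoch (q ^ 2) (q ^ 2) l * qPoch q q (k - 2 * l))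

/-- discrete delta function on the lattice, supported at `η γ q^p` -/
def qdelta (q γ η : ℝ) (p : ℤ) : ℝ → ℝ := fun x => if x = η * γ * q ^ p then 1 else 0

/-!
Let `Mₙ` be the integral of `x²ⁿ e_{q²}(-x²)` over the positive half of the lattice. The functional
equation `e_{q²}(-q²x²) = (1 + x²) e_{q²}(-x²)` gives `q⁻²ⁿ Mₙ = q (Mₙ + Mₙ₊₁)`, so the vanishing of
all even moments of `F`, that is `∑ₙ aₙ Mₙ₊ₘ = 0` for all `m`, turns into `∑ₙ Aₙ q⁻²ⁿᵏ = 0` for all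
`k`, where `Aₙ = aₙ Mₙ = O(sⁿ q^{n²})`. Hence `∑ₙ Aₙ R(q⁻²ⁿ) = 0` for every polynomial `R`. Taking
`R(X) = ∏_{1 ≤ i ≤ N} (1 - q²ⁱ X)` removes the terms `1 ≤ n ≤ N`, and the tail `n > N` is
`O((sq)^N)`; letting `N → ∞` gives `A₀ = 0`. Dropping the zeroth term and repeating, all `Aₙ`
vanish.
-/

section QPochhammer

open Filter Topology

variable {q : ℝ}

lemma summable_norm_mul_pow (hq : |q| < 1) (a : ℝ) : Summable fun j : ℕ => ‖-(a * q ^ j)‖ :=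
  ((summable_geometric_of_abs_lt_one hq).mul_left a).neg.norm

lemma hasProd_qPochInf (hq : |q| < 1) (a : ℝ) :
    HasProd (fun j : ℕ => 1 - a * q ^ j) (qPochInf q a) := by
  simpa only [qPochInf, sub_eq_add_neg] using
    (multipliable_one_add_of_summable (summable_norm_mul_pow hq a)).hasProd

lemma tendsto_qPoch (hq : |q| < 1) (a : ℝ) :
    Tendsto (qPoch q a) atTop (𝓝 (qPochInf q a)) :=
  (hasProd_qPochInf hq a).tendsto_prod_nat

lemma qPochInf_ne_zero (hq : |q| < 1) {a : ℝ} (ha : ∀ j : ℕ, a * q ^ j ≠ 1) :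
    qPochInf q a ≠ 0 := by
  simp only [qPochInf, sub_eq_add_neg]
  refine tprod_one_add_ne_zero_of_summable (fun j => ?_) (summable_norm_mul_pow hq a)
  rw [← sub_eq_add_neg]
  exact sub_ne_zero.2 (ha j).symm

lemma qPochInf_eq_mul (hq : |q| < 1) (a : ℝ) :
    qPochInf q a = (1 - a) * qPochInf q (a * q) := by
  have hshift : ∀ j : ℕ, 1 - a * q ^ (j + 1) = 1 - a * q * q ^ j := fun j => by ring
  have hm : Multipliable fun j : ℕ => 1 - a * q ^ (j + 1) := by
    simpa only [hshift] using (hasProd_qPochInf hq (a * q)).multipliable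
  have hsplit := tprod_eq_zero_mul' (f := fun j : ℕ => 1 - a * q ^ j) hm
  simpa only [qPochInf, hshift, pow_zero, mul_one] using hsplit

lemma one_le_qPochInf_neg (hq₀ : 0 ≤ q) (hq₁ : q < 1) {a : ℝ} (ha : 0 ≤ a) :
    1 ≤ qPochInf q (-a) := by
  refine ge_of_tendsto' (hasProd_qPochInf (by rwa [abs_of_nonneg hq₀]) (-a)) fun s =>
    Finset.one_le_prod fun j _ => ?_
  have : 0 ≤ a * q ^ j := by positivity
  linarith

lemma qPoch_eq_zero {a : ℝ} {N j : ℕ} (hj : j < N) (h : a * q ^ j = 1) : qPoch q a N = 0 :=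
  Finset.prod_eq_zero (Finset.mem_range.2 hj) (by rw [h, sub_self])

lemma abs_qPoch_le {a : ℝ} {N : ℕ} (h : ∀ j < N, 1 ≤ a * q ^ j) :
    |qPoch q a N| ≤ ∏ j ∈ Finset.range N, a * q ^ j := by
  rw [qPoch, Finset.abs_prod]
  refine Finset.prod_le_prod (fun _ _ => abs_nonneg _) fun j hj => ?_
  have := h j (Finset.mem_range.1 hj)
  exact abs_le.2 ⟨by linarith, by linarith⟩

lemma hasSum_mul_qPoch {A X : ℕ → ℝ} (h : ∀ k : ℕ, HasSum (fun n => A n * X n ^ k) 0)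
    (q c : ℝ) (N : ℕ) : HasSum (fun n => A n * qPoch q (c * X n) N) 0 := by
  suffices ∀ k : ℕ, HasSum (fun n => A n * X n ^ k * qPoch q (c * X n) N) 0 by
    simpa using this 0
  induction N with
  | zero => simpa [qPoch] using h
  | succ N ih =>
    intro k
    have hfactor : ∀ n, A n * X n ^ k * qPoch q (c * X n) (N + 1) =
        A n * X n ^ k * qPoch q (c * X n) N -
          c * q ^ N * (A n * X n ^ (k + 1) * qPoch q (c * X n) N) := fun n => by
      rw [qPoch, Finset.prod_range_succ, ← qPoch]
      ring
    simpa only [hfactor, mul_zero, sub_zero] using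
      (ih k).sub ((ih (k + 1)).mul_left (c * q ^ N))

end QPochhammer

section Uniqueness

open Filter Topology

variable {q s C : ℝ} {A : ℕ → ℝ}

lemma summable_pow_mul_pow_sq (hq : |q| < 1) (r : ℝ) :
    Summable fun n : ℕ => r ^ n * q ^ n ^ 2 := by
  have hlim : Tendsto (fun n : ℕ => |r * q ^ n|) atTop (𝓝 0) := by
    simpa using ((tendsto_pow_atTop_nhds_zero_of_abs_lt_one hq).const_mul r).abs
  refine Summable.of_norm_bounded_eventually_nat summable_geometric_two ?_
  filter_upwards [hlim.eventually_le_const (by norm_num : (0 : ℝ) < 1 / 2)] with n hn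
  calc ‖r ^ n * q ^ n ^ 2‖ = |r * q ^ n| ^ n := by
        rw [Real.norm_eq_abs, ← abs_pow, mul_pow, ← pow_mul, sq]
    _ ≤ (1 / 2) ^ n := pow_le_pow_left₀ (abs_nonneg _) hn n

lemma prod_sq_mul_sq_pow (q c : ℝ) (N : ℕ) :
    ∏ j ∈ Finset.range N, q ^ 2 * c * (q ^ 2) ^ j = q ^ (N ^ 2 + N) * c ^ N := by
  induction N with
  | zero => simp
  | succ N ih => rw [Finset.prod_range_succ, ih]; ring

lemma abs_mul_qPoch_le (hq : q ∈ Set.Ioo (0 : ℝ) 1)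
    (hA : ∀ n, |A n| ≤ C * s ^ n * q ^ n ^ 2) (N l : ℕ) :
    |A (N + l) * qPoch (q ^ 2) (q ^ 2 * (q ^ 2)⁻¹ ^ (N + l)) N| ≤
      C * (s * q) ^ N * (s ^ l * q ^ l ^ 2) := by
  obtain ⟨hq₀, hq₁⟩ := hq
  have hfactor : ∀ j < N, 1 ≤ q ^ 2 * (q ^ 2)⁻¹ ^ (N + l) * (q ^ 2) ^ j := fun j hj => by
    rw [mul_right_comm, ← pow_succ', inv_pow, ← div_eq_mul_inv, one_le_div (by positivity)]
    exact pow_le_pow_of_le_one (by positivity) (pow_le_one₀ hq₀.le hq₁.le) (by omega)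
  have hqPoch := abs_qPoch_le hfactor
  rw [prod_sq_mul_sq_pow] at hqPoch
  calc |A (N + l) * qPoch (q ^ 2) (q ^ 2 * (q ^ 2)⁻¹ ^ (N + l)) N|
      ≤ C * s ^ (N + l) * q ^ (N + l) ^ 2 * (q ^ (N ^ 2 + N) * ((q ^ 2)⁻¹ ^ (N + l)) ^ N) := by
        rw [abs_mul]
        exact mul_le_mul (hA _) hqPoch (abs_nonneg _) ((abs_nonneg _).trans (hA _))
    _ = C * (s * q) ^ N * (s ^ l * q ^ l ^ 2) := by
        have hexp : q ^ (N + l) ^ 2 * q ^ (N ^ 2 + N) =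
            q ^ N * q ^ l ^ 2 * ((q ^ 2) ^ (N + l)) ^ N := by ring
        rw [inv_pow, inv_pow, mul_assoc, ← mul_assoc (q ^ (N + l) ^ 2), hexp,
          mul_inv_cancel_right₀ (by positivity), mul_pow, pow_add]
        ring

lemma abs_zeroth_mul_qPoch_le (hq : q ∈ Set.Ioo (0 : ℝ) 1)
    (hA : ∀ n, |A n| ≤ C * s ^ n * q ^ n ^ 2)
    (h0 : ∀ k : ℕ, HasSum (fun n => A n * ((q ^ 2)⁻¹ ^ n) ^ k) 0) {N : ℕ} (hN : 0 < N) :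
    |A 0 * qPoch (q ^ 2) (q ^ 2) N| ≤ C * (s * q) ^ N * ∑' l : ℕ, s ^ l * q ^ l ^ 2 := by
  have hq₀ : 0 < q := hq.1
  set u : ℕ → ℝ := fun n => A n * qPoch (q ^ 2) (q ^ 2 * (q ^ 2)⁻¹ ^ n) N with hu
  have hsum : HasSum u 0 := hasSum_mul_qPoch h0 (q ^ 2) (q ^ 2) N
  have hhead : ∑ n ∈ Finset.range N, u n = u 0 := by
    refine Finset.sum_eq_single_of_mem 0 (Finset.mem_range.2 hN) fun n hn hn0 => ?_
    obtain ⟨j, rfl⟩ := Nat.exists_eq_succ_of_ne_zero hn0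
    have hroot : q ^ 2 * (q ^ 2)⁻¹ ^ (j + 1) * (q ^ 2) ^ j = 1 := by
      rw [mul_right_comm, ← pow_succ', ← mul_pow, mul_inv_cancel₀ (by positivity), one_pow]
    have hj : j < N := j.lt_succ_self.trans (Finset.mem_range.1 hn)
    simp only [hu, Nat.succ_eq_add_one, qPoch_eq_zero hj hroot, mul_zero]
  have htail : |∑' l, u (N + l)| ≤ C * (s * q) ^ N * ∑' l : ℕ, s ^ l * q ^ l ^ 2 :=
    tsum_of_norm_bounded (f := fun l => u (N + l))
      ((summable_pow_mul_pow_sq (by rw [abs_of_pos hq₀]; exact hq.2) s).hasSum.mul_left _)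
      (abs_mul_qPoch_le hq hA N)
  have hsplit : u 0 + ∑' l, u (N + l) = 0 := by
    simpa only [hhead, hsum.tsum_eq, add_comm] using hsum.summable.sum_add_tsum_nat_add N
  have hu0 : u 0 = A 0 * qPoch (q ^ 2) (q ^ 2) N := by simp only [hu, pow_zero, mul_one]
  rwa [← hu0, eq_neg_of_add_eq_zero_left hsplit, abs_neg]

lemma zeroth_eq_zero_of_hasSum (hq : q ∈ Set.Ioo (0 : ℝ) 1) (hs : s ∈ Set.Ico 0 q⁻¹)
    (hA : ∀ n, |A n| ≤ C * s ^ n * q ^ n ^ 2)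
    (h0 : ∀ k : ℕ, HasSum (fun n => A n * ((q ^ 2)⁻¹ ^ n) ^ k) 0) : A 0 = 0 := by
  obtain ⟨hq₀, hq₁⟩ := hq
  have hsq : s * q < 1 := (lt_inv_mul_iff₀' hq₀).1 (by simpa using hs.2)
  have hq2 : q ^ 2 < 1 := pow_lt_one₀ hq₀.le hq₁ two_ne_zero
  have hq2abs : |q ^ 2| < 1 := by rwa [abs_of_pos (by positivity)]
  have hbound : Tendsto (fun N : ℕ => C * (s * q) ^ N * ∑' l : ℕ, s ^ l * q ^ l ^ 2) atTop
      (𝓝 0) := by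
    simpa using ((tendsto_pow_atTop_nhds_zero_of_lt_one
      (mul_nonneg hs.1 hq₀.le) hsq).const_mul C).mul_const (∑' l : ℕ, s ^ l * q ^ l ^ 2)
  have hzero : Tendsto (fun N => A 0 * qPoch (q ^ 2) (q ^ 2) N) atTop (𝓝 0) :=
    squeeze_zero_norm' ((eventually_gt_atTop 0).mono fun N hN =>
      abs_zeroth_mul_qPoch_le ⟨hq₀, hq₁⟩ hA h0 hN) hbound
  have hlim := (tendsto_qPoch hq2abs (q ^ 2)).const_mul (A 0)
  refine (mul_eq_zero.1 (tendsto_nhds_unique hlim hzero)).resolve_right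
    (qPochInf_ne_zero hq2abs fun j => ?_)
  rw [← pow_succ']
  exact (pow_lt_one₀ (by positivity) hq2 j.succ_ne_zero).ne

theorem eq_zero_of_hasSum_mul_pow (hq : q ∈ Set.Ioo (0 : ℝ) 1) (hs : s ∈ Set.Ico 0 q⁻¹)
    (hA : ∀ n, |A n| ≤ C * s ^ n * q ^ n ^ 2)
    (h0 : ∀ k : ℕ, HasSum (fun n => A n * ((q ^ 2)⁻¹ ^ n) ^ k) 0) (n : ℕ) : A n = 0 := by
  have hA0 : A 0 = 0 := zeroth_eq_zero_of_hasSum hq hs hA h0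
  induction n generalizing A C with
  | zero => exact hA0
  | succ _ ih =>
    have hq₀ : 0 < q := hq.1
    have hC : 0 ≤ C := by simpa using (abs_nonneg _).trans (hA 0)
    have hA' : ∀ n, |A (n + 1)| ≤ C * s * s ^ n * q ^ n ^ 2 := fun n =>
      calc |A (n + 1)| ≤ C * s ^ (n + 1) * q ^ (n + 1) ^ 2 := hA (n + 1)
        _ ≤ C * s ^ (n + 1) * q ^ n ^ 2 :=
          mul_le_mul_of_nonneg_left
            (pow_le_pow_of_le_one hq₀.le hq.2.le (Nat.pow_le_pow_left n.le_succ 2))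
            (mul_nonneg hC (pow_nonneg hs.1 _))
        _ = C * s * s ^ n * q ^ n ^ 2 := by ring
    have h0' : ∀ k : ℕ, HasSum (fun n => A (n + 1) * ((q ^ 2)⁻¹ ^ n) ^ k) 0 := fun k => by
      have hshift : HasSum (fun n => A (n + 1) * ((q ^ 2)⁻¹ ^ (n + 1)) ^ k) 0 := by
        simpa [hA0] using (hasSum_nat_add_iff' 1).2 (h0 k)
      have hscale : ∀ n, A (n + 1) * ((q ^ 2)⁻¹ ^ n) ^ k =
          (q ^ 2) ^ k * (A (n + 1) * ((q ^ 2)⁻¹ ^ (n + 1)) ^ k) := fun n => by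
        rw [pow_succ _ n, mul_pow _ _ k, inv_pow (q ^ 2) k]
        field_simp
      simpa only [hscale, mul_zero] using hshift.mul_left ((q ^ 2) ^ k)
    exact ih hA' h0' (zeroth_eq_zero_of_hasSum hq hs hA' h0')

end Uniqueness

section JacksonIntegral

variable {q γ : ℝ} {f g : ℝ → ℝ}

/-- Summability of the series defining the Jackson integral `jacksonInt q γ f`. -/
def JacksonIntegrable (q γ : ℝ) (f : ℝ → ℝ) : Prop :=
  Summable fun k : ℤ => q ^ k * γ * f (q ^ k * γ)

/-- The Jackson integral over the half-lattice `{q^k γ : k ∈ ℤ}`; on even functions `qInt` is twice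
this. Like `tsum`, it is `0` when `f` is not `JacksonIntegrable`. -/
def jacksonInt (q γ : ℝ) (f : ℝ → ℝ) : ℝ :=
  (1 - q) * ∑' k : ℤ, q ^ k * γ * f (q ^ k * γ)

lemma qInt_of_even (hf : f.Even) : qInt q γ f = 2 * jacksonInt q γ f := by
  simp only [qInt, jacksonInt, hf _, ← two_mul, mul_left_comm _ (2 : ℝ), tsum_mul_left]

lemma jacksonInt_add (hf : JacksonIntegrable q γ f) (hg : JacksonIntegrable q γ g) :
    jacksonInt q γ (fun x => f x + g x) = jacksonInt q γ f + jacksonInt q γ g := by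
  simp only [jacksonInt, mul_add, hf.tsum_add hg]

lemma jacksonInt_const_mul (c : ℝ) (f : ℝ → ℝ) :
    jacksonInt q γ (fun x => c * f x) = c * jacksonInt q γ f := by
  simp only [jacksonInt, mul_left_comm _ c, tsum_mul_left]

lemma jacksonInt_comp_mul_left (hq : q ≠ 0) (f : ℝ → ℝ) :
    jacksonInt q γ (fun x => f (q * x)) = q⁻¹ * jacksonInt q γ f := by
  have hterm : ∀ k : ℤ, q ^ k * γ * f (q * (q ^ k * γ)) =
      q⁻¹ * (q ^ (k + 1) * γ * f (q ^ (k + 1) * γ)) := fun k => by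
    rw [zpow_add_one₀ hq, mul_right_comm _ q γ, mul_comm _ q]
    field_simp
  have hshift : ∑' k : ℤ, q ^ (k + 1) * γ * f (q ^ (k + 1) * γ) =
      ∑' k : ℤ, q ^ k * γ * f (q ^ k * γ) :=
    (Equiv.addRight (1 : ℤ)).tsum_eq fun k : ℤ => q ^ k * γ * f (q ^ k * γ)
  simp only [jacksonInt, hterm, tsum_mul_left, hshift, mul_left_comm _ q⁻¹ (tsum _)]

lemma JacksonIntegrable.const_mul (hf : JacksonIntegrable q γ f) (c : ℝ) :
    JacksonIntegrable q γ (fun x => c * f x) := by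
  simpa only [JacksonIntegrable, mul_left_comm _ c] using Summable.mul_left c hf

lemma jacksonInt_pos (hq : q ∈ Set.Ioo (0 : ℝ) 1) (hγ : 0 < γ) (hf : JacksonIntegrable q γ f)
    (hpos : ∀ x, 0 < x → 0 < f x) : 0 < jacksonInt q γ f := by
  have hterm : ∀ k : ℤ, 0 < q ^ k * γ * f (q ^ k * γ) := fun k =>
    have hx : 0 < q ^ k * γ := mul_pos (zpow_pos hq.1 k) hγ
    mul_pos hx (hpos _ hx)
  exact mul_pos (sub_pos.2 hq.2) (Summable.tsum_pos hf (fun k => (hterm k).le) 0 (hterm 0))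

lemma JacksonIntegrable.of_bounded (hq : q ∈ Set.Ioo (0 : ℝ) 1) (hγ : 0 < γ) {K L : ℝ}
    (hK : ∀ x, |f x| ≤ K) (hL : ∀ x, x ^ 2 * |f x| ≤ L) : JacksonIntegrable q γ f := by
  obtain ⟨hq₀, hq₁⟩ := hq
  have hgeom := summable_geometric_of_lt_one hq₀.le hq₁
  have hterm : ∀ x, 0 < x → ‖x * f x‖ = x * |f x| := fun x hx => by
    rw [norm_mul, Real.norm_of_nonneg hx.le, Real.norm_eq_abs]
  refine Summable.of_nat_of_neg ?_ ?_
  · refine Summable.of_norm_bounded (hgeom.mul_right (γ * K)) fun k => ?_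
    rw [zpow_natCast, hterm _ (by positivity), mul_assoc]
    gcongr
    exact hK _
  · refine Summable.of_norm_bounded (hgeom.mul_right (γ⁻¹ * L)) fun k => ?_
    have hx : 0 < q ^ (-(k : ℤ)) * γ := by positivity
    rw [hterm _ hx]
    calc q ^ (-(k : ℤ)) * γ * |f (q ^ (-(k : ℤ)) * γ)|
        = (q ^ (-(k : ℤ)) * γ)⁻¹ *
            ((q ^ (-(k : ℤ)) * γ) ^ 2 * |f (q ^ (-(k : ℤ)) * γ)|) := by field_simp
      _ ≤ (q ^ (-(k : ℤ)) * γ)⁻¹ * L := by gcongr; exact hL _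
      _ = q ^ k * (γ⁻¹ * L) := by
        rw [mul_inv, zpow_neg, inv_inv, zpow_natCast, mul_assoc]

theorem hasSum_jacksonInt {ι : Type*} (hq : q ∈ Set.Ioo (0 : ℝ) 1) (hγ : 0 < γ)
    {f : ι → ℝ → ℝ} (hf : ∀ i, JacksonIntegrable q γ (f i))
    (hsum : Summable fun i => jacksonInt q γ fun x => |f i x|) :
    HasSum (fun i => jacksonInt q γ (f i)) (jacksonInt q γ fun x => ∑' i, f i x) := by
  set u : ι → ℤ → ℝ := fun i k => q ^ k * γ * f i (q ^ k * γ) with hu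
  have hnorm : ∀ i, ∑' k, ‖u i k‖ = (1 - q)⁻¹ * jacksonInt q γ fun x => |f i x| := fun i => by
    have hx : ∀ k : ℤ, 0 < q ^ k * γ := fun k => mul_pos (zpow_pos hq.1 k) hγ
    simp only [hu, norm_mul _ (f i _), Real.norm_of_nonneg (hx _).le, Real.norm_eq_abs, jacksonInt]
    rw [inv_mul_cancel_left₀ (sub_pos.2 hq.2).ne']
  have husum : Summable (Function.uncurry u) := by
    refine Summable.of_norm ((summable_prod_of_nonneg fun _ => norm_nonneg _).2
      ⟨fun i => (hf i).norm, ?_⟩)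
    simpa only [Function.uncurry, hnorm] using hsum.mul_left (1 - q)⁻¹
  have hfiber := (husum.hasSum.prod_fiberwise fun i => (hf i).hasSum).mul_left (1 - q)
  have hswap : ∑' p, Function.uncurry u p = ∑' k : ℤ, q ^ k * γ * ∑' i, f i (q ^ k * γ) := by
    simp only [← tsum_mul_left]
    exact husum.tsum_prod.trans husum.tsum_comm.symm
  rwa [hswap] at hfiber

end JacksonIntegral

section GaussMoments

variable {q γ : ℝ}

lemma qGauss_even (q : ℝ) : (qGauss q).Even := fun x => by simp only [qGauss, neg_sq]

lemma one_le_qPochInf_neg_sq (hq : q ∈ Set.Ioo (0 : ℝ) 1) (x : ℝ) :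
    1 ≤ qPochInf (q ^ 2) (-(x ^ 2)) :=
  one_le_qPochInf_neg (sq_nonneg q) (pow_lt_one₀ hq.1.le hq.2 two_ne_zero) (sq_nonneg x)

lemma qGauss_pos (hq : q ∈ Set.Ioo (0 : ℝ) 1) (x : ℝ) : 0 < qGauss q x :=
  one_div_pos.2 (zero_lt_one.trans_le (one_le_qPochInf_neg_sq hq x))

lemma qGauss_le_one (hq : q ∈ Set.Ioo (0 : ℝ) 1) (x : ℝ) : qGauss q x ≤ 1 :=
  div_le_one_of_le₀ (one_le_qPochInf_neg_sq hq x)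
    (zero_le_one.trans (one_le_qPochInf_neg_sq hq x))

lemma qGauss_mul (hq : q ∈ Set.Ioo (0 : ℝ) 1) (x : ℝ) :
    qGauss q (q * x) = (1 + x ^ 2) * qGauss q x := by
  have hq2 : |q ^ 2| < 1 := by
    rw [abs_of_nonneg (sq_nonneg q)]
    exact pow_lt_one₀ hq.1.le hq.2 two_ne_zero
  have hx : 1 + x ^ 2 ≠ 0 := by positivity
  rw [qGauss, qGauss, qPochInf_eq_mul hq2 (-(x ^ 2)), sub_neg_eq_add,
    show -(x ^ 2) * q ^ 2 = -((q * x) ^ 2) by ring, mul_one_div, div_mul_cancel_left₀ hx, one_div]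

lemma exists_pow_mul_qGauss_le (hq : q ∈ Set.Ioo (0 : ℝ) 1) (n : ℕ) :
    ∃ K, ∀ x, x ^ (2 * n) * qGauss q x ≤ K := by
  induction n with
  | zero => exact ⟨1, fun x => by simpa using qGauss_le_one hq x⟩
  | succ n ih =>
    obtain ⟨K, hK⟩ := ih
    have hq₀ : 0 < q := hq.1
    refine ⟨(q ^ (2 * n))⁻¹ * K, fun x => ?_⟩
    have hx : 0 ≤ x ^ (2 * n) := (even_two_mul n).pow_nonneg x
    calc x ^ (2 * (n + 1)) * qGauss q x = x ^ (2 * n) * (x ^ 2 * qGauss q x) := by ring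
      _ ≤ x ^ (2 * n) * qGauss q (q * x) := by
        rw [qGauss_mul hq]
        have := (qGauss_pos hq x).le
        gcongr
        linarith
      _ = (q ^ (2 * n))⁻¹ * ((q * x) ^ (2 * n) * qGauss q (q * x)) := by
        rw [mul_pow]
        field_simp
      _ ≤ (q ^ (2 * n))⁻¹ * K := by gcongr; exact hK _

lemma jacksonIntegrable_pow_mul_qGauss (hq : q ∈ Set.Ioo (0 : ℝ) 1) (hγ : 0 < γ) (n : ℕ) :
    JacksonIntegrable q γ fun x => x ^ (2 * n) * qGauss q x := by
  obtain ⟨K, hK⟩ := exists_pow_mul_qGauss_le hq n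
  obtain ⟨L, hL⟩ := exists_pow_mul_qGauss_le hq (n + 1)
  have habs : ∀ x, |x ^ (2 * n) * qGauss q x| = x ^ (2 * n) * qGauss q x := fun x =>
    abs_of_nonneg (mul_nonneg ((even_two_mul n).pow_nonneg x) (qGauss_pos hq x).le)
  refine .of_bounded (L := L) hq hγ (fun x => (habs x).trans_le (hK x)) fun x => ?_
  calc x ^ 2 * |x ^ (2 * n) * qGauss q x| = x ^ (2 * (n + 1)) * qGauss q x := by
        rw [habs]
        ring
    _ ≤ L := hL x

/-- The `2n`-th moment of the `q`-Gaussian on the half-lattice `{q^k γ : k ∈ ℤ}`. -/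
def gaussMoment (q γ : ℝ) (n : ℕ) : ℝ := jacksonInt q γ fun x => x ^ (2 * n) * qGauss q x

lemma gaussMoment_pos (hq : q ∈ Set.Ioo (0 : ℝ) 1) (hγ : 0 < γ) (n : ℕ) :
    0 < gaussMoment q γ n :=
  jacksonInt_pos hq hγ (jacksonIntegrable_pow_mul_qGauss hq hγ n) fun x hx =>
    mul_pos (pow_pos hx _) (qGauss_pos hq x)

lemma gaussMoment_eq_mul_add (hq : q ∈ Set.Ioo (0 : ℝ) 1) (hγ : 0 < γ) (n : ℕ) :
    gaussMoment q γ n = q ^ (2 * n + 1) * (gaussMoment q γ n + gaussMoment q γ (n + 1)) := by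
  have hq₀ : q ≠ 0 := hq.1.ne'
  have hpoint : ∀ x, (q * x) ^ (2 * n) * qGauss q (q * x) =
      q ^ (2 * n) * (x ^ (2 * n) * qGauss q x + x ^ (2 * (n + 1)) * qGauss q x) := fun x => by
    rw [qGauss_mul hq]
    ring
  have hsubst : q⁻¹ * gaussMoment q γ n =
      q ^ (2 * n) * (gaussMoment q γ n + gaussMoment q γ (n + 1)) := by
    simp only [gaussMoment]
    rw [← jacksonInt_comp_mul_left hq₀ fun x => x ^ (2 * n) * qGauss q x,
      ← jacksonInt_add (jacksonIntegrable_pow_mul_qGauss hq hγ n)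
        (jacksonIntegrable_pow_mul_qGauss hq hγ (n + 1))]
    simp only [hpoint, jacksonInt_const_mul]
  rw [pow_succ', mul_assoc, ← hsubst, mul_inv_cancel_left₀ hq₀]

lemma pow_sq_mul_gaussMoment_le (hq : q ∈ Set.Ioo (0 : ℝ) 1) (hγ : 0 < γ) (n : ℕ) :
    q ^ n ^ 2 * gaussMoment q γ n ≤ gaussMoment q γ 0 := by
  have hq₀ : 0 < q := hq.1
  induction n with
  | zero => simp
  | succ n ih =>
    have hstep : q ^ (2 * n + 1) * gaussMoment q γ (n + 1) ≤ gaussMoment q γ n := by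
      have hn : 0 < q ^ (2 * n + 1) * gaussMoment q γ n :=
        mul_pos (by positivity) (gaussMoment_pos hq hγ n)
      linarith [gaussMoment_eq_mul_add hq hγ n]
    calc q ^ (n + 1) ^ 2 * gaussMoment q γ (n + 1)
        = q ^ n ^ 2 * (q ^ (2 * n + 1) * gaussMoment q γ (n + 1)) := by ring
      _ ≤ q ^ n ^ 2 * gaussMoment q γ n := by gcongr
      _ ≤ gaussMoment q γ 0 := ih

variable {s C : ℝ} {a : ℕ → ℝ}

lemma abs_mul_gaussMoment_le (hq : q ∈ Set.Ioo (0 : ℝ) 1) (hγ : 0 < γ)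
    (ha : ∀ n, |a n| ≤ C * s ^ n * q ^ (2 * n ^ 2)) (m n : ℕ) :
    |a n| * gaussMoment q γ (n + m) ≤
      C * gaussMoment q γ 0 / q ^ m ^ 2 * (s / q ^ (2 * m)) ^ n * q ^ n ^ 2 := by
  have hq₀ : 0 < q := hq.1
  have hmoment : gaussMoment q γ (n + m) ≤ gaussMoment q γ 0 / q ^ (n + m) ^ 2 := by
    rw [le_div_iff₀' (by positivity)]
    exact pow_sq_mul_gaussMoment_le hq hγ (n + m)
  calc |a n| * gaussMoment q γ (n + m)
      ≤ C * s ^ n * q ^ (2 * n ^ 2) * (gaussMoment q γ 0 / q ^ (n + m) ^ 2) :=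
        mul_le_mul (ha n) hmoment (gaussMoment_pos hq hγ _).le ((abs_nonneg _).trans (ha n))
    _ = C * gaussMoment q γ 0 / q ^ m ^ 2 * (s / q ^ (2 * m)) ^ n * q ^ n ^ 2 := by
      have hexp : q ^ (n + m) ^ 2 = q ^ n ^ 2 * (q ^ (2 * m)) ^ n * q ^ m ^ 2 := by ring
      rw [hexp, div_pow, mul_comm 2 (n ^ 2), pow_mul]
      field_simp

lemma hasSum_mul_gaussMoment (hq : q ∈ Set.Ioo (0 : ℝ) 1) (hγ : 0 < γ)
    (ha : ∀ n, |a n| ≤ C * s ^ n * q ^ (2 * n ^ 2)) (m : ℕ) :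
    HasSum (fun n => a n * gaussMoment q γ (n + m))
      (jacksonInt q γ fun x => x ^ (2 * m) * ((∑' n, a n * x ^ (2 * n)) * qGauss q x)) := by
  have hsum : Summable fun n => |a n| * gaussMoment q γ (n + m) := by
    refine Summable.of_nonneg_of_le
      (fun n => mul_nonneg (abs_nonneg _) (gaussMoment_pos hq hγ _).le)
      (abs_mul_gaussMoment_le hq hγ ha m) ?_
    simpa only [mul_assoc] using (summable_pow_mul_pow_sq
      (by rw [abs_of_pos hq.1]; exact hq.2) _).mul_left (C * gaussMoment q γ 0 / q ^ m ^ 2)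
  have habs : ∀ n x, |a n * (x ^ (2 * (n + m)) * qGauss q x)| =
      |a n| * (x ^ (2 * (n + m)) * qGauss q x) := fun n x => by
    rw [abs_mul, abs_of_nonneg (mul_nonneg ((even_two_mul _).pow_nonneg x) (qGauss_pos hq x).le)]
  have hexchange := hasSum_jacksonInt hq hγ
    (f := fun n x => a n * (x ^ (2 * (n + m)) * qGauss q x))
    (fun n => (jacksonIntegrable_pow_mul_qGauss hq hγ (n + m)).const_mul (a n))
    (by simpa only [habs, jacksonInt_const_mul, gaussMoment] using hsum)
  convert hexchange using 1
  · simp only [jacksonInt_const_mul, gaussMoment]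
  · congr 1 with x
    rw [← tsum_mul_right, ← tsum_mul_left]
    exact tsum_congr fun n => by ring

lemma hasSum_mul_gaussMoment_mul_pow (hq : q ∈ Set.Ioo (0 : ℝ) 1) (hγ : 0 < γ)
    (h0 : ∀ m, HasSum (fun n => a n * gaussMoment q γ (n + m)) 0) (k m : ℕ) :
    HasSum (fun n => a n * gaussMoment q γ (n + m) * ((q ^ 2)⁻¹ ^ n) ^ k) 0 := by
  induction k generalizing m with
  | zero => simpa using h0 m
  | succ k ih =>
    have hq₀ : q ≠ 0 := hq.1.ne'
    have hrec : ∀ n, gaussMoment q γ (n + m) * (q ^ 2)⁻¹ ^ n =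
        q ^ (2 * m + 1) * (gaussMoment q γ (n + m) + gaussMoment q γ (n + (m + 1))) := fun n => by
      have hexp : q ^ (2 * (n + m) + 1) = q ^ (2 * m + 1) * (q ^ 2) ^ n := by ring
      have hmoment := gaussMoment_eq_mul_add hq hγ (n + m)
      rw [hexp, mul_right_comm] at hmoment
      rw [inv_pow, ← div_eq_mul_inv, div_eq_iff (pow_ne_zero n (pow_ne_zero 2 hq₀))]
      exact hmoment
    have hterm : ∀ n, a n * gaussMoment q γ (n + m) * ((q ^ 2)⁻¹ ^ n) ^ (k + 1) =
        q ^ (2 * m + 1) * (a n * gaussMoment q γ (n + m) * ((q ^ 2)⁻¹ ^ n) ^ k +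
          a n * gaussMoment q γ (n + (m + 1)) * ((q ^ 2)⁻¹ ^ n) ^ k) := fun n => by
      rw [pow_succ', ← mul_assoc, mul_assoc (a n), hrec]
      ring
    simpa only [hterm, add_zero, mul_zero] using
      ((ih m).add (ih (m + 1))).mul_left (q ^ (2 * m + 1))

end GaussMoments

theorem stmt7_general (q γ s : ℝ) (hq : q ∈ Set.Ioo (0 : ℝ) 1) (hγ : 0 < γ)
    (hs : s ∈ Set.Ico 0 q⁻¹) (a : ℕ → ℝ) (C : ℝ)
    (ha : ∀ n : ℕ, |a n| ≤ C * s ^ n * q ^ (2 * n ^ 2))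
    (F : ℝ → ℝ) (hF : ∀ x, F x = (∑' n : ℕ, a n * x ^ (2 * n)) * qGauss q x)
    (hmom : ∀ k : ℕ, qInt q γ (fun x => x ^ (2 * k) * F x) = 0) :
    ∀ x, F x = 0 := by
  have heven : ∀ m, (fun x => x ^ (2 * m) * F x).Even := fun m x => by
    simp only [hF, qGauss_even q x, (even_two_mul _).neg_pow]
  have hmoments : ∀ m, HasSum (fun n => a n * gaussMoment q γ (n + m)) 0 := fun m => by
    have hint : jacksonInt q γ (fun x => x ^ (2 * m) * F x) = 0 := by
      simpa [qInt_of_even (heven m)] using hmom m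
    simpa only [← hF, hint] using hasSum_mul_gaussMoment hq hγ ha m
  have hbound : ∀ n, |a n * gaussMoment q γ n| ≤ C * gaussMoment q γ 0 * s ^ n * q ^ n ^ 2 :=
    fun n => by
      simpa [abs_mul, abs_of_pos (gaussMoment_pos hq hγ n)] using
        abs_mul_gaussMoment_le hq hγ ha 0 n
  have hcoeff : ∀ n, a n = 0 := fun n =>
    (mul_eq_zero.1 (eq_zero_of_hasSum_mul_pow hq hs hbound
      (fun k => hasSum_mul_gaussMoment_mul_pow hq hγ hmoments k 0) n)).resolve_right
      (gaussMoment_pos hq hγ n).ne'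
  exact fun x => by simp only [hF, hcoeff, zero_mul, tsum_zero]

/-- Moment-determinacy lemma, even case. -/
theorem stmt7 (q γ s : ℝ) (hq : q ∈ Set.Ioo (0 : ℝ) 1) (hγ : 0 < γ)
    (hs : s ∈ Set.Ioo (0 : ℝ) 1)
    (a : ℕ → ℝ) (C : ℝ) (hC : 0 < C)
    (ha : ∀ n : ℕ, |a n| ≤ C * s ^ n * q ^ (2 * n ^ 2))
    (F : ℝ → ℝ) (hF : ∀ x, F x = (∑' n : ℕ, a n * x ^ (2 * n)) * qGauss q x)
    (hmom : ∀ k : ℕ, qInt q γ (fun x => x ^ (2 * k) * F x) = 0) :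
    ∀ x, F x = 0 := by
  exact stmt7_general q γ s hq hγ ⟨hs.1.le, hs.2.trans ((one_lt_inv₀ hq.1).2 hq.2)⟩ a C ha F hF hmom
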